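/- arXiv:1111.2138 — 2 statements merged into one kernel-verified Lean document; each statement's English description precedes it below -/
import Mathlib

section
/- Let T be a nonnegative tensor of order m ≥ 2 and dimension n ≥ 2, and let I be a nonempty subset of {1,…,n}. Then ρ(T_I) ≤ ρ(T). -/
open Finset

/-- `(T x^{m-1})_i` for an order-`(k+1)` tensor encoded by its first index
and the `k` trailing indices (so for an order-`m` tensor, `k = m - 1`). -/
def tapp {ι : Type*} [Fintype ι] {k : ℕ} (T : ι → (Fin k → ι) → ℝ) (x : ι → ℝ) (i : ι) : ℝ :=
  ∑ β : Fin k → ι, T i β * ∏ l, x (β l)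

/-- All entries of the tensor are nonnegative. -/
def TNonneg {ι : Type*} {k : ℕ} (T : ι → (Fin k → ι) → ℝ) : Prop :=
  ∀ i β, 0 ≤ T i β

/-- `T` is strictly nonnegative: nonnegative, and `T x^{m-1} > 0` whenever `x > 0`. -/
def TStrictlyNonneg {ι : Type*} [Fintype ι] {k : ℕ} (T : ι → (Fin k → ι) → ℝ) : Prop :=
  TNonneg T ∧ ∀ x : ι → ℝ, (∀ i, 0 < x i) → ∀ i, 0 < tapp T x i

/-- Representation matrix `G(T)`: `G(T)_{ij}` is the sum of all `T_{i i₂…i_m}` with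
`j ∈ {i₂,…,i_m}`. -/
def repMat {ι : Type*} [Fintype ι] [DecidableEq ι] {k : ℕ}
    (T : ι → (Fin k → ι) → ℝ) : Matrix ι ι ℝ :=
  fun i j => ∑ β : Fin k → ι, if ∃ l, β l = j then T i β else 0

/-- Majorization matrix `M(T)`: `M(T)_{ij} = T_{i j j … j}`. -/
def majMat {ι : Type*} {k : ℕ} (T : ι → (Fin k → ι) → ℝ) : Matrix ι ι ℝ :=
  fun i j => T i (fun _ => j)

/-- A square matrix is reducible if some nonempty proper index subset `I` satisfies
`A i j = 0` for all `i ∈ I`, `j ∉ I`. -/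
def MatReducible {ι : Type*} [Fintype ι] (A : Matrix ι ι ℝ) : Prop :=
  ∃ I : Finset ι, I.Nonempty ∧ I ≠ Finset.univ ∧ ∀ i ∈ I, ∀ j ∉ I, A i j = 0

def MatIrreducible {ι : Type*} [Fintype ι] (A : Matrix ι ι ℝ) : Prop :=
  ¬ MatReducible A

/-- A square nonnegative matrix is primitive if some positive power is entrywise positive. -/
def MatPrimitive {ι : Type*} [Fintype ι] [DecidableEq ι] (A : Matrix ι ι ℝ) : Prop :=
  ∃ p : ℕ, 0 < p ∧ ∀ i j, 0 < (A ^ p) i j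

/-- `lam ∈ ℂ` is an eigenvalue of `T`:
`(T x^{m-1})_i = lam * x_i^{m-1}` for some nonzero `x ∈ ℂⁿ`. -/
def TIsEig {ι : Type*} [Fintype ι] {k : ℕ} (T : ι → (Fin k → ι) → ℝ) (lam : ℂ) : Prop :=
  ∃ x : ι → ℂ, x ≠ 0 ∧
    ∀ i, (∑ β : Fin k → ι, (T i β : ℂ) * ∏ l, x (β l)) = lam * x i ^ k

/-- Spectral radius: the supremum of moduli of eigenvalues. -/
noncomputable def specRad {ι : Type*} [Fintype ι] {k : ℕ}
    (T : ι → (Fin k → ι) → ℝ) : ℝ :=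
  sSup {r : ℝ | ∃ lam : ℂ, TIsEig T lam ∧ r = ‖lam‖}

/-- Induced tensor `T_I` on a subset `I` of the index set. -/
def inducedT {ι : Type*} {k : ℕ} (T : ι → (Fin k → ι) → ℝ) (I : Finset ι) :
    {i // i ∈ I} → (Fin k → {i // i ∈ I}) → ℝ :=
  fun i β => T i.val (fun l => (β l).val)

/-- The identity tensor: `E_{i₁…i_m} = 1` if all indices coincide, `0` otherwise. -/
def idT (ι : Type*) [DecidableEq ι] (k : ℕ) : ι → (Fin k → ι) → ℝ :=
  fun i β => if ∀ l, β l = i then 1 else 0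

/-- A tensor is reducible if some nonempty proper index subset `I` satisfies
`T_{i₁ i₂ … i_m} = 0` for all `i₁ ∈ I` and `i₂, …, i_m ∉ I`. -/
def TReducible {ι : Type*} [Fintype ι] {k : ℕ} (T : ι → (Fin k → ι) → ℝ) : Prop :=
  ∃ I : Finset ι, I.Nonempty ∧ I ≠ Finset.univ ∧
    ∀ i ∈ I, ∀ β : Fin k → ι, (∀ l, β l ∉ I) → T i β = 0

/-- The map `F_T(x)_i = ((T x^{m-1})_i)^{1/(m-1)}` (here `k = m - 1`). -/
noncomputable def FT {ι : Type*} [Fintype ι] {k : ℕ}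
    (T : ι → (Fin k → ι) → ℝ) (x : ι → ℝ) : ι → ℝ :=
  fun i => (tapp T x i) ^ ((k : ℝ)⁻¹)

/-- A tensor is primitive if some iterate of `F_T` is entrywise positive on every
nonzero nonnegative vector. -/
def TPrimitive {ι : Type*} [Fintype ι] {k : ℕ} (T : ι → (Fin k → ι) → ℝ) : Prop :=
  ∃ p : ℕ, 0 < p ∧ ∀ x : ι → ℝ, (∀ i, 0 ≤ x i) → x ≠ 0 → ∀ i, 0 < (FT T)^[p] x i

/-- `T` is weakly positive: all off-diagonal entries of `M(T)` are positive. -/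
def TWeaklyPositive {ι : Type*} {k : ℕ} (T : ι → (Fin k → ι) → ℝ) : Prop :=
  ∀ i j, i ≠ j → 0 < T i (fun _ => j)

/-- `T` is essentially positive: `T x^{m-1} > 0` for every nonzero `x ≥ 0`. -/
def TEssentiallyPositive {ι : Type*} [Fintype ι] {k : ℕ} (T : ι → (Fin k → ι) → ℝ) : Prop :=
  ∀ x : ι → ℝ, (∀ i, 0 ≤ x i) → x ≠ 0 → ∀ i, 0 < tapp T x i

/-- Hilbert's projective metric between two positive vectors:
`d(u,v) = log (max_i v_i/u_i) - log (min_i v_i/u_i)`. -/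
noncomputable def hilbertD {n : ℕ} (hn : 0 < n) (u v : Fin n → ℝ) : ℝ :=
  Real.log ((Finset.univ : Finset (Fin n)).sup' ⟨⟨0, hn⟩, Finset.mem_univ _⟩
      (fun i => v i / u i)) -
  Real.log ((Finset.univ : Finset (Fin n)).inf' ⟨⟨0, hn⟩, Finset.mem_univ _⟩
      (fun i => v i / u i))

/-!
Call `r ≥ 0` a subeigenvalue of `T` if `r x_i^{m-1} ≤ (T x^{m-1})_i` for some nonzero `x ≥ 0`.
The modulus of an eigenvalue of `T_I` is a subeigenvalue of `T_I` by the triangle inequality, hence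
one of `T` after extending the vector by zero. It remains to find an eigenvalue of `T` above a given
subeigenvalue. If `T` is positive, the largest subeigenvalue `s` is an eigenvalue: were the
inequality strict somewhere, then `y = F_T(x)` would satisfy `s y_i^{m-1} < (T y^{m-1})_i` for all
`i`, and `s` could be increased. In general, apply this to `T + ε` and let `ε → 0` on the compact
simplex.
-/

open Filter Topology

section Tapp

variable {ι κ : Type*} [Fintype ι] [Fintype κ] {k : ℕ}
  {T : ι → (Fin k → ι) → ℝ} {S : κ → (Fin k → κ) → ℝ}

lemma continuous_tapp {X : Type*} [TopologicalSpace X] {A : X → ι → (Fin k → ι) → ℝ}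
    {x : X → ι → ℝ} (hA : Continuous A) (hx : Continuous x) (i : ι) :
    Continuous fun p => tapp (A p) (x p) i := by
  unfold tapp
  fun_prop

lemma tapp_smul (T : ι → (Fin k → ι) → ℝ) (c : ℝ) (x : ι → ℝ) (i : ι) :
    tapp T (c • x) i = c ^ k * tapp T x i := by
  simp only [tapp, mul_sum, Pi.smul_apply, smul_eq_mul, prod_mul_distrib, prod_const, card_univ,
    Fintype.card_fin, mul_left_comm]

lemma tapp_nonneg (hT : TNonneg T) {x : ι → ℝ} (hx : ∀ i, 0 ≤ x i) (i : ι) : 0 ≤ tapp T x i :=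
  sum_nonneg fun β _ => mul_nonneg (hT i β) (prod_nonneg fun _ _ => hx _)

lemma tapp_le_sum_mul_pow (hT : TNonneg T) {x : ι → ℝ} {a : ℝ} (hx : ∀ i, 0 ≤ x i)
    (hxa : ∀ i, x i ≤ a) (i : ι) : tapp T x i ≤ (∑ β, T i β) * a ^ k := by
  rw [tapp, sum_mul]
  refine sum_le_sum fun β _ => mul_le_mul_of_nonneg_left ?_ (hT i β)
  calc ∏ l, x (β l) ≤ ∏ _l : Fin k, a := prod_le_prod (fun _ _ => hx _) fun _ _ => hxa _
    _ = a ^ k := Fin.prod_const k a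

lemma tapp_lt_tapp (hk : k ≠ 0) (hT : TNonneg T) (hM : ∀ i j, 0 < majMat T i j) {u v : ι → ℝ}
    (hu : ∀ i, 0 ≤ u i) (huv : u < v) (i : ι) : tapp T u i < tapp T v i := by
  obtain ⟨hle, j, hj⟩ := Pi.lt_def.1 huv
  refine sum_lt_sum (fun β _ => ?_) ⟨fun _ => j, mem_univ _, ?_⟩
  · exact mul_le_mul_of_nonneg_left (prod_le_prod (fun _ _ => hu _) fun _ _ => hle _) (hT i β)
  · refine mul_lt_mul_of_pos_left ?_ (hM i j)
    simpa using pow_lt_pow_left₀ hj (hu j) hk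

lemma tapp_comp_le_tapp (hT : TNonneg T) {f : κ → ι} (hf : Function.Injective f)
    (hST : ∀ i β, S i β ≤ T (f i) (f ∘ β)) {y : ι → ℝ} (hy : ∀ i, 0 ≤ y i) (i : κ) :
    tapp S (y ∘ f) i ≤ tapp T y (f i) := by
  have hprod (γ : Fin k → ι) : 0 ≤ ∏ l, y (γ l) := prod_nonneg fun _ _ => hy _
  calc tapp S (y ∘ f) i
      ≤ ∑ β : Fin k → κ, T (f i) (f ∘ β) * ∏ l, y ((f ∘ β) l) :=
        sum_le_sum fun β _ => mul_le_mul_of_nonneg_right (hST i β) (hprod (f ∘ β))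
    _ = ∑ γ ∈ univ.map ⟨fun β : Fin k → κ => f ∘ β, hf.comp_left⟩,
          T (f i) γ * ∏ l, y (γ l) := by rw [sum_map]; rfl
    _ ≤ tapp T y (f i) :=
        sum_le_sum_of_subset_of_nonneg (subset_univ _) fun γ _ _ =>
          mul_nonneg (hT (f i) γ) (hprod γ)

lemma FT_nonneg (hT : TNonneg T) {x : ι → ℝ} (hx : ∀ i, 0 ≤ x i) (i : ι) : 0 ≤ FT T x i :=
  Real.rpow_nonneg (tapp_nonneg hT hx i) _

lemma FT_pow (hk : k ≠ 0) (hT : TNonneg T) {x : ι → ℝ} (hx : ∀ i, 0 ≤ x i) (i : ι) :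
    FT T x i ^ k = tapp T x i :=
  Real.rpow_inv_natCast_pow (tapp_nonneg hT hx i) hk

lemma mul_FT_pow_lt_tapp_FT (hk : k ≠ 0) (hT : TNonneg T) (hM : ∀ i j, 0 < majMat T i j)
    {x : ι → ℝ} {s : ℝ} (hx : ∀ i, 0 ≤ x i) (hs : 0 ≤ s) (hle : ∀ i, s * x i ^ k ≤ tapp T x i)
    {j : ι} (hlt : s * x j ^ k < tapp T x j) (i : ι) :
    s * FT T x i ^ k < tapp T (FT T x) i := by
  obtain ⟨c, hc, rfl⟩ : ∃ c : ℝ, 0 ≤ c ∧ c ^ k = s :=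
    ⟨s ^ (k : ℝ)⁻¹, Real.rpow_nonneg hs _, Real.rpow_inv_natCast_pow hs hk⟩
  have hpow (i : ι) : (c • x) i ^ k = c ^ k * x i ^ k := mul_pow c (x i) k
  have hsmul_lt : c • x < FT T x := by
    refine Pi.lt_def.2 ⟨fun i => ?_, j, ?_⟩
    · refine le_of_pow_le_pow_left₀ hk (FT_nonneg hT hx i) ?_
      rw [hpow, FT_pow hk hT hx]
      exact hle i
    · refine lt_of_pow_lt_pow_left₀ k (FT_nonneg hT hx j) ?_
      rwa [hpow, FT_pow hk hT hx]
  calc c ^ k * FT T x i ^ k = tapp T (c • x) i := by rw [FT_pow hk hT hx, tapp_smul]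
    _ < tapp T (FT T x) i := tapp_lt_tapp hk hT hM (fun i => mul_nonneg hc (hx i)) hsmul_lt i

end Tapp

lemma ne_zero_of_mem_stdSimplex {ι : Type*} [Fintype ι] {x : ι → ℝ} (hx : x ∈ stdSimplex ℝ ι) :
    x ≠ 0 := by
  rintro rfl
  simpa using hx.2

/-- The subeigenvalues of a tensor: the reals `r ≥ 0` with `r x_i^k ≤ (T x^k)_i` for all `i`, for
some nonzero nonnegative vector `x`. By homogeneity `x` is taken in the standard simplex; see
`mem_subeigenvalues_of_ne_zero` for arbitrary `x`. For nonnegative `T`, the greatest subeigenvalue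
is the Collatz–Wielandt value of `T`. -/
def subeigenvalues {ι : Type*} [Fintype ι] {k : ℕ} (T : ι → (Fin k → ι) → ℝ) : Set ℝ :=
  {r | 0 ≤ r ∧ ∃ x ∈ stdSimplex ℝ ι, ∀ i, r * x i ^ k ≤ tapp T x i}

section Subeigenvalues

variable {ι κ : Type*} [Fintype ι] [Fintype κ] {k : ℕ}
  {T : ι → (Fin k → ι) → ℝ} {S : κ → (Fin k → κ) → ℝ}

lemma mem_subeigenvalues_of_ne_zero {r : ℝ} {x : ι → ℝ} (hr : 0 ≤ r) (hx : ∀ i, 0 ≤ x i)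
    (hne : x ≠ 0) (h : ∀ i, r * x i ^ k ≤ tapp T x i) : r ∈ subeigenvalues T := by
  have hsum : 0 < ∑ i, x i := Fintype.sum_pos (lt_of_le_of_ne hx hne.symm)
  have hc : 0 ≤ (∑ i, x i)⁻¹ := (inv_pos.2 hsum).le
  refine ⟨hr, (∑ i, x i)⁻¹ • x, ⟨fun i => mul_nonneg hc (hx i), ?_⟩, fun i => ?_⟩
  · simp only [Pi.smul_apply, smul_eq_mul, ← mul_sum]
    exact inv_mul_cancel₀ hsum.ne'
  · rw [tapp_smul, Pi.smul_apply, smul_eq_mul, mul_pow, mul_left_comm]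
    exact mul_le_mul_of_nonneg_left (h i) (pow_nonneg hc k)

lemma subeigenvalues_subset_Icc (hT : TNonneg T) :
    subeigenvalues T ⊆ Set.Icc 0 (∑ i, ∑ β, T i β) := by
  rintro r ⟨hr, x, hx, h⟩
  refine ⟨hr, ?_⟩
  obtain ⟨j, hj⟩ := Function.ne_iff.1 (ne_zero_of_mem_stdSimplex hx)
  obtain ⟨i, -, hmax⟩ := exists_max_image univ x ⟨j, mem_univ j⟩
  have hxi : 0 < x i := ((hx.1 j).lt_of_ne' hj).trans_le (hmax j (mem_univ j))
  calc r ≤ ∑ β, T i β := le_of_mul_le_mul_right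
        ((h i).trans (tapp_le_sum_mul_pow hT hx.1 (fun j => hmax j (mem_univ j)) i))
        (pow_pos hxi k)
    _ ≤ ∑ i, ∑ β, T i β := single_le_sum (f := fun i => ∑ β, T i β)
        (fun i _ => sum_nonneg fun β _ => hT i β) (mem_univ i)

lemma isCompact_subeigenvalues (hT : TNonneg T) : IsCompact (subeigenvalues T) := by
  set K : Set ((ι → ℝ) × ℝ) :=
    (stdSimplex ℝ ι ×ˢ Set.Icc 0 (∑ i, ∑ β, T i β)) ∩
      ⋂ i, {p | p.2 * p.1 i ^ k ≤ tapp T p.1 i} with hK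
  have hKc : IsCompact K :=
    ((isCompact_stdSimplex ℝ ι).prod isCompact_Icc).inter_right <| isClosed_iInter fun i =>
      isClosed_le (by fun_prop) (continuous_tapp continuous_const continuous_fst i)
  convert hKc.image continuous_snd
  ext r
  simp only [hK, Set.mem_image, Set.mem_inter_iff, Set.mem_prod, Set.mem_iInter, Prod.exists]
  constructor
  · intro hr
    obtain ⟨x, hx, h⟩ := hr.2
    exact ⟨x, r, ⟨⟨hx, subeigenvalues_subset_Icc hT hr⟩, h⟩, rfl⟩
  · rintro ⟨x, _, ⟨⟨hx, hr⟩, h⟩, rfl⟩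
    exact ⟨hr.1, x, hx, h⟩

lemma subeigenvalues_subset_of_le_comp (hk : k ≠ 0) (hT : TNonneg T) {f : κ → ι}
    (hf : Function.Injective f) (hST : ∀ i β, S i β ≤ T (f i) (f ∘ β)) :
    subeigenvalues S ⊆ subeigenvalues T := by
  rintro r ⟨hr, x, hx, h⟩
  set y : ι → ℝ := Function.extend f x 0
  have hyf : y ∘ f = x := Function.extend_comp hf x 0
  have hy_of_notMem {i : ι} (hi : ¬∃ j, f j = i) : y i = 0 := Function.extend_apply' _ _ _ hi
  have hy (i : ι) : 0 ≤ y i := by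
    by_cases hi : ∃ j, f j = i
    · obtain ⟨j, rfl⟩ := hi
      exact (hx.1 j).trans_eq (congrFun hyf j).symm
    · exact (hy_of_notMem hi).ge
  refine mem_subeigenvalues_of_ne_zero hr hy ?_ fun i => ?_
  · intro hy0
    exact ne_zero_of_mem_stdSimplex hx (hyf.symm.trans (by rw [hy0, Pi.zero_comp]))
  by_cases hi : ∃ j, f j = i
  · obtain ⟨j, rfl⟩ := hi
    calc r * y (f j) ^ k = r * x j ^ k := by rw [← hyf, Function.comp_apply]
      _ ≤ tapp S (y ∘ f) j := hyf ▸ h j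
      _ ≤ tapp T y (f j) := tapp_comp_le_tapp hT hf hST hy j
  · rw [hy_of_notMem hi, zero_pow hk, mul_zero]
    exact tapp_nonneg hT hy i

lemma exists_gt_mem_subeigenvalues {y : ι → ℝ} {s : ℝ} (hs : 0 ≤ s) (hy : ∀ i, 0 ≤ y i)
    (hne : y ≠ 0) (h : ∀ i, s * y i ^ k < tapp T y i) : ∃ t ∈ subeigenvalues T, s < t := by
  have hev : ∀ᶠ t in 𝓝[>] s, ∀ i, t * y i ^ k < tapp T y i :=
    nhdsWithin_le_nhds <| eventually_all.2 fun i =>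
      (by fun_prop : Continuous fun t : ℝ => t * y i ^ k).continuousAt.eventually_lt
        continuousAt_const (h i)
  obtain ⟨t, ht, hst⟩ := (hev.and self_mem_nhdsWithin).exists
  exact ⟨t, mem_subeigenvalues_of_ne_zero (hs.trans (le_of_lt hst)) hy hne fun i => (ht i).le, hst⟩

lemma exists_tapp_eq_of_isGreatest (hk : k ≠ 0) (hT : TNonneg T) (hM : ∀ i j, 0 < majMat T i j)
    {s : ℝ} (hs : IsGreatest (subeigenvalues T) s) :
    ∃ x ∈ stdSimplex ℝ ι, ∀ i, tapp T x i = s * x i ^ k := by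
  obtain ⟨⟨hs0, x, hx, hle⟩, hmax⟩ := hs
  refine ⟨x, hx, ?_⟩
  by_contra! ⟨j, hj⟩
  have hlt : s * x j ^ k < tapp T x j := (hle j).lt_of_ne' hj
  have hFT : FT T x ≠ 0 := by
    intro h0
    have hpos : 0 < FT T x j ^ k := by
      rw [FT_pow hk hT hx.1]
      exact (mul_nonneg hs0 (pow_nonneg (hx.1 j) k)).trans_lt hlt
    simp [h0, hk] at hpos
  obtain ⟨t, ht, hst⟩ := exists_gt_mem_subeigenvalues hs0 (FT_nonneg hT hx.1) hFT
    (mul_FT_pow_lt_tapp_FT hk hT hM hx.1 hs0 hle hlt)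
  exact (hmax ht).not_gt hst

lemma isClosed_setOf_exists_tapp_eq (k : ℕ) {J : Set ℝ} (hJ : IsCompact J) :
    IsClosed {T : ι → (Fin k → ι) → ℝ |
      ∃ s ∈ J, ∃ x ∈ stdSimplex ℝ ι, ∀ i, tapp T x i = s * x i ^ k} := by
  have : CompactSpace (J ×ˢ stdSimplex ℝ ι) :=
    isCompact_iff_compactSpace.1 (hJ.prod (isCompact_stdSimplex ℝ ι))
  have hclosed : IsClosed {p : (ι → (Fin k → ι) → ℝ) × (J ×ˢ stdSimplex ℝ ι) |
      ∀ i, tapp p.1 p.2.1.2 i = p.2.1.1 * p.2.1.2 i ^ k} := by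
    simp only [Set.ofPred_forall]
    exact isClosed_iInter fun i => isClosed_eq
      (continuous_tapp continuous_fst (by fun_prop) i) (by fun_prop)
  convert isClosedMap_fst_of_compactSpace _ hclosed
  ext T
  simp only [Set.mem_ofPred_eq, Set.mem_image, Prod.exists, Subtype.exists, Set.mem_prod,
    exists_and_right, exists_eq_right, and_assoc, exists_and_left, exists_prop]

lemma exists_tapp_eq_of_mem_subeigenvalues (hk : k ≠ 0) (hT : TNonneg T) {r : ℝ}
    (hr : r ∈ subeigenvalues T) :
    ∃ s, r ≤ s ∧ ∃ x ∈ stdSimplex ℝ ι, ∀ i, tapp T x i = s * x i ^ k := by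
  set P : ℝ → ι → (Fin k → ι) → ℝ := fun ε i β => T i β + ε
  set R : ℝ := ∑ i, ∑ β, P 1 i β
  have hP_pos {ε : ℝ} (hε : 0 < ε) (i : ι) (β : Fin k → ι) : 0 < P ε i β :=
    add_pos_of_nonneg_of_pos (hT i β) hε
  have hP_nonneg {ε : ℝ} (hε : 0 < ε) : TNonneg (P ε) := fun i β => (hP_pos hε i β).le
  have hP_eig : ∀ ε ∈ Set.Ioo (0 : ℝ) 1, P ε ∈ {T : ι → (Fin k → ι) → ℝ |
      ∃ s ∈ Set.Icc r R, ∃ x ∈ stdSimplex ℝ ι, ∀ i, tapp T x i = s * x i ^ k} := by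
    intro ε hε
    have hrε : r ∈ subeigenvalues (P ε) :=
      subeigenvalues_subset_of_le_comp hk (hP_nonneg hε.1) Function.injective_id
        (fun i β => le_add_of_nonneg_right hε.1.le) hr
    obtain ⟨s, hs⟩ := (isCompact_subeigenvalues (hP_nonneg hε.1)).exists_isGreatest ⟨r, hrε⟩
    have hs1 : s ∈ subeigenvalues (P 1) :=
      subeigenvalues_subset_of_le_comp hk (hP_nonneg one_pos) Function.injective_id
        (fun i β => by simpa [P] using hε.2.le) hs.1
    exact ⟨s, ⟨hs.2 hrε, (subeigenvalues_subset_Icc (hP_nonneg one_pos) hs1).2⟩,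
      exists_tapp_eq_of_isGreatest hk (hP_nonneg hε.1) (fun i j => hP_pos hε.1 i _) hs⟩
  have hP_tendsto : Tendsto P (𝓝[>] 0) (𝓝 T) := by
    have hP : Continuous P := by fun_prop
    simpa [P] using hP.continuousWithinAt.tendsto (x := (0 : ℝ)) (s := Set.Ioi 0)
  obtain ⟨s, hs, hx⟩ := (isClosed_setOf_exists_tapp_eq k isCompact_Icc).mem_of_tendsto hP_tendsto
    (eventually_of_mem (Ioo_mem_nhdsGT one_pos) hP_eig)
  exact ⟨s, hs.1, hx⟩

end Subeigenvalues

section SpectralRadius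

variable {ι κ : Type*} [Fintype ι] [Fintype κ] {k : ℕ}
  {T : ι → (Fin k → ι) → ℝ} {S : κ → (Fin k → κ) → ℝ}

lemma TIsEig.norm_mem_subeigenvalues {lam : ℂ} (h : TIsEig T lam) :
    ‖lam‖ ∈ subeigenvalues fun i β => |T i β| := by
  obtain ⟨x, hx, hlam⟩ := h
  refine mem_subeigenvalues_of_ne_zero (norm_nonneg lam) (fun i => norm_nonneg (x i)) ?_ fun i => ?_
  · exact fun h0 => hx (funext fun i => norm_eq_zero.1 (congrFun h0 i))
  calc ‖lam‖ * ‖x i‖ ^ k = ‖∑ β : Fin k → ι, (T i β : ℂ) * ∏ l, x (β l)‖ := by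
        rw [hlam i, norm_mul, norm_pow]
    _ ≤ ∑ β : Fin k → ι, ‖(T i β : ℂ) * ∏ l, x (β l)‖ := norm_sum_le _ _
    _ = tapp (fun i β => |T i β|) (fun j => ‖x j‖) i := by
        simp only [tapp, norm_mul, norm_prod, Complex.norm_real, Real.norm_eq_abs]

lemma TIsEig_ofReal {s : ℝ} {x : ι → ℝ} (hx : x ≠ 0) (h : ∀ i, tapp T x i = s * x i ^ k) :
    TIsEig T s := by
  refine ⟨fun i => (x i : ℂ), ?_, fun i => ?_⟩
  · exact fun h0 => hx (funext fun i => Complex.ofReal_eq_zero.1 (congrFun h0 i))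
  · simpa [tapp] using congrArg (fun r : ℝ => (r : ℂ)) (h i)

lemma bddAbove_norm_eigenvalues (T : ι → (Fin k → ι) → ℝ) :
    BddAbove {r : ℝ | ∃ lam : ℂ, TIsEig T lam ∧ r = ‖lam‖} := by
  refine ⟨∑ i, ∑ β, |T i β|, ?_⟩
  rintro _ ⟨lam, hlam, rfl⟩
  exact (subeigenvalues_subset_Icc (fun i β => abs_nonneg (T i β)) hlam.norm_mem_subeigenvalues).2

lemma TIsEig.norm_le_specRad {lam : ℂ} (h : TIsEig T lam) : ‖lam‖ ≤ specRad T :=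
  le_csSup (bddAbove_norm_eigenvalues T) ⟨lam, h, rfl⟩

lemma specRad_nonneg (T : ι → (Fin k → ι) → ℝ) : 0 ≤ specRad T := by
  refine Real.sSup_nonneg ?_
  rintro _ ⟨lam, -, rfl⟩
  exact norm_nonneg lam

lemma le_specRad_of_mem_subeigenvalues (hk : k ≠ 0) (hT : TNonneg T) {r : ℝ}
    (hr : r ∈ subeigenvalues T) : r ≤ specRad T := by
  obtain ⟨s, hrs, x, hx, hxs⟩ := exists_tapp_eq_of_mem_subeigenvalues hk hT hr
  calc r ≤ s := hrs
    _ ≤ ‖(s : ℂ)‖ := (le_abs_self s).trans_eq (Complex.norm_real s).symm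
    _ ≤ specRad T := (TIsEig_ofReal (ne_zero_of_mem_stdSimplex hx) hxs).norm_le_specRad

/-- Taking `f = id`, this is also the monotonicity of the spectral radius. -/
theorem specRad_induced_le_general (hk : k ≠ 0) (hT : TNonneg T) {f : κ → ι}
    (hf : Function.Injective f) (hST : ∀ i β, |S i β| ≤ T (f i) (f ∘ β)) :
    specRad S ≤ specRad T := by
  refine Real.sSup_le ?_ (specRad_nonneg T)
  rintro _ ⟨lam, hlam, rfl⟩
  exact le_specRad_of_mem_subeigenvalues hk hT
    (subeigenvalues_subset_of_le_comp hk hT hf hST hlam.norm_mem_subeigenvalues)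

end SpectralRadius

theorem specRad_induced_le
    (m n : ℕ) (hm : 2 ≤ m) (hn : 2 ≤ n)
    (T : Fin n → (Fin (m - 1) → Fin n) → ℝ) (hT : TNonneg T)
    (I : Finset (Fin n)) (hI : I.Nonempty) :
    specRad (inducedT T I) ≤ specRad T :=
  specRad_induced_le_general (by omega) hT Subtype.val_injective
    fun _ _ => (abs_of_nonneg (hT _ _)).le
end

section
/- A nonnegative tensor T of order m ≥ 2 and dimension n ≥ 2 is essentially positive if and only if T is weakly positive and all of its diagonal entries T_{i i … i} are positive. -/
open Finset

section Majorization

variable {ι : Type*} [Fintype ι] {k : ℕ} {T : ι → (Fin k → ι) → ℝ}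

theorem tapp_single [DecidableEq ι] (T : ι → (Fin k → ι) → ℝ) (i j : ι) (c : ℝ) :
    tapp T (Pi.single j c) i = majMat T i j * c ^ k := by
  have other_terms_vanish (β : Fin k → ι) (hβ : β ≠ fun _ => j) :
      T i β * ∏ l, (Pi.single j c : ι → ℝ) (β l) = 0 := by
    obtain ⟨l, hl⟩ := Function.ne_iff.mp hβ
    rw [prod_eq_zero (mem_univ l) (Pi.single_eq_of_ne (M := fun _ => ℝ) hl c), mul_zero]
  calc tapp T (Pi.single j c) i
      = T i (fun _ => j) * ∏ _l : Fin k, (Pi.single j c : ι → ℝ) j :=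
        Fintype.sum_eq_single _ other_terms_vanish
    _ = majMat T i j * c ^ k := by
        rw [Pi.single_eq_same, Fin.prod_const, majMat]

theorem majMat_mul_pow_le_tapp (hT : TNonneg T) {x : ι → ℝ} (hx : 0 ≤ x) (i j : ι) :
    majMat T i j * x j ^ k ≤ tapp T x i := by
  have terms_nonneg (β : Fin k → ι) : 0 ≤ T i β * ∏ l, x (β l) :=
    mul_nonneg (hT i β) (prod_nonneg fun l _ => hx (β l))
  calc majMat T i j * x j ^ k
      = T i (fun _ => j) * ∏ _l : Fin k, x j := by rw [Fin.prod_const, majMat]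
    _ ≤ tapp T x i :=
        single_le_sum (f := fun β : Fin k → ι => T i β * ∏ l, x (β l))
          (fun β _ => terms_nonneg β) (mem_univ _)

theorem TEssentiallyPositive.majMat_pos (h : TEssentiallyPositive T) (i j : ι) :
    0 < majMat T i j := by
  classical
  have basis_nonneg : (0 : ι → ℝ) ≤ Pi.single j 1 := Pi.single_nonneg.mpr zero_le_one
  have basis_ne_zero : (Pi.single j 1 : ι → ℝ) ≠ 0 := Pi.single_ne_zero_iff.mpr one_ne_zero
  simpa only [tapp_single, one_pow, mul_one] using h _ basis_nonneg basis_ne_zero i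

theorem tEssentiallyPositive_of_majMat_pos (hT : TNonneg T) (hM : ∀ i j, 0 < majMat T i j) :
    TEssentiallyPositive T := by
  intro x hx hx_ne i
  obtain ⟨j, hj⟩ := Function.ne_iff.mp hx_ne
  have hxj : 0 < x j := (hx j).lt_of_ne' hj
  calc 0 < majMat T i j * x j ^ k := mul_pos (hM i j) (pow_pos hxj k)
    _ ≤ tapp T x i := majMat_mul_pow_le_tapp hT hx i j

theorem tEssentiallyPositive_iff_majMat_pos (hT : TNonneg T) :
    TEssentiallyPositive T ↔ ∀ i j, 0 < majMat T i j :=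
  ⟨TEssentiallyPositive.majMat_pos, tEssentiallyPositive_of_majMat_pos hT⟩

end Majorization

theorem majMat_pos_iff_tWeaklyPositive_and_diag_pos {ι : Type*} {k : ℕ}
    {T : ι → (Fin k → ι) → ℝ} :
    (∀ i j, 0 < majMat T i j) ↔ TWeaklyPositive T ∧ ∀ i, 0 < T i (fun _ => i) := by
  refine ⟨fun h => ⟨fun i j _ => h i j, fun i => h i i⟩, fun ⟨h_off, h_diag⟩ i j => ?_⟩
  obtain rfl | hij := eq_or_ne i j
  · exact h_diag i
  · exact h_off i j hij

theorem essentially_positive_iff_weakly_positive_and_diag_pos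
    (m n : ℕ) (hm : 2 ≤ m) (hn : 2 ≤ n)
    (T : Fin n → (Fin (m - 1) → Fin n) → ℝ) (hT : TNonneg T) :
    TEssentiallyPositive T ↔
      TWeaklyPositive T ∧ ∀ i, 0 < T i (fun _ => i) :=
  (tEssentiallyPositive_iff_majMat_pos hT).trans majMat_pos_iff_tWeaklyPositive_and_diag_pos
end
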